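/- Let F₁ ∈ RV^∞_{α₁} and F₂ ∈ RV^∞_{α₂} with α₁ > −1 and α₂ > −1, where F₁, F₂ are positive and locally bounded on [0,∞). Then the convolution F₁*F₂(t) := ∫_0^t F₁(t−s)F₂(s)ds belongs to RV^∞_{α₁+α₂+1} and, as t → ∞, F₁*F₂(t) ~ B(α₁+1, α₂+1) · t · F₁(t) · F₂(t), where B(·,·) denotes the Beta function. -/

import Mathlib

/-!
Substituting `s = t u` gives
`F₁ * F₂ (t) / (t F₁(t) F₂(t)) = ∫₀¹ (F₁(t(1-u)) / F₁(t)) (F₂(tu) / F₂(t)) du`,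
whose integrand tends pointwise to `(1-u)^α₁ u^α₂`, with integral `B(α₁+1, α₂+1)`. The limit passes
through the integral by dominated convergence. The majorant `C (1-u)^γ₁ u^γ₂`, where
`-1 < γᵢ < min αᵢ 0`, comes from Potter's bound `F(tu)/F(t) ≤ C u^γ` (`potter_near`). That bound
rests on the uniform boundedness of the increments of `log ∘ F ∘ exp` (`increment_bounded`), where
measurability of `F` enters, and on the local boundedness of `F` for small `t u`. Regular variation
of the convolution with index `α₁ + α₂ + 1` then follows from the asymptotic equivalence.
-/

open Filter MeasureTheory Set Asymptotics

noncomputable section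

/-- `F` has constant sign near infinity. -/
def EvSign (F : ℝ → ℝ) : Prop :=
  (∀ᶠ t in atTop, 0 < F t) ∨ (∀ᶠ t in atTop, F t < 0)

/-- `F` is regularly varying at infinity with index `α`. -/
def RVInf (α : ℝ) (F : ℝ → ℝ) : Prop :=
  Measurable F ∧ EvSign F ∧
    ∀ x : ℝ, 0 < x → Tendsto (fun t => F (t * x) / F t) atTop (nhds (x ^ α))

/-- `F` is second-order regularly varying at infinity with first-order parameter `α`,
second-order parameter `ρ` and auxiliary function `A`. -/
def SORVInf (α ρ : ℝ) (A F : ℝ → ℝ) : Prop :=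
  RVInf α F ∧ EvSign A ∧
    ∀ x : ℝ, 0 < x →
      Tendsto (fun t => (F (t * x) / F t - x ^ α) / A t) atTop
        (nhds (x ^ α * ∫ u in (1:ℝ)..x, u ^ (ρ - 1)))

/-- The class `𝒜^∞_ρ` of regularly varying auxiliary functions tending to `0`. -/
def AuxA (ρ : ℝ) (A : ℝ → ℝ) : Prop :=
  RVInf ρ A ∧ Tendsto A atTop (nhds 0)

/-- `F` is positive and locally bounded on `[0,∞)`. -/
def PosLocBdd (F : ℝ → ℝ) : Prop :=
  (∀ t : ℝ, 0 ≤ t → 0 < F t) ∧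
    ∀ r : ℝ, ∃ C : ℝ, ∀ t ∈ Icc (0:ℝ) r, |F t| ≤ C

/-- The Beta function. -/
def RBeta (a b : ℝ) : ℝ := Real.Gamma a * Real.Gamma b / Real.Gamma (a + b)

/-! ### Potter bounds -/

/-- A measurable function whose increments `h (x + y) - h x` converge pointwise as `x → ∞` has
increments that are bounded uniformly in `y ∈ [0, 1]` for large `x`. The proof uses only convergence
in measure: `x + w` is reached from both `x` and `x + y` by a step outside the exceptional sets,
for some `w ∈ [1, 2]`. -/
lemma increment_bounded {h : ℝ → ℝ} {α : ℝ} (hm : Measurable h)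
    (hlim : ∀ y, 0 ≤ y → Tendsto (fun x => h (x + y) - h x) atTop (nhds (α * y))) :
    ∃ X K : ℝ, ∀ x, X ≤ x → ∀ y ∈ Icc (0 : ℝ) 1, |h (x + y) - h x| ≤ K := by
  -- For large `x`, `D x` is the small set of steps over which the increment is too big.
  set D : ℝ → Set ℝ := fun x => {z | z ∈ Icc (0 : ℝ) 2 ∧ 2 * |α| + 1 < |h (x + z) - h x|} with hD
  have hDm : ∀ x, MeasurableSet (D x) := fun x =>
    measurableSet_Icc.inter (measurableSet_lt measurable_const
      (f := fun _ : ℝ => 2 * |α| + 1) (g := fun z => |h (x + z) - h x|) (by fun_prop))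
  have hDlim : Tendsto (fun x => volume (D x)) atTop (nhds (volume (∅ : Set ℝ))) := by
    refine tendsto_measure_of_tendsto_indicator (L := atTop) (B := Icc (0 : ℝ) 2) hDm
      measurableSet_Icc (by simp) (Eventually.of_forall fun x z hz => hz.1) fun z => ?_
    by_cases hz : z ∈ Icc (0 : ℝ) 2
    · have hlt : |α * z| < 2 * |α| + 1 := by
        rw [abs_mul, abs_of_nonneg hz.1]
        nlinarith [abs_nonneg α, hz.2]
      filter_upwards [(hlim z hz.1).abs.eventually_lt_const hlt] with x hx
      simp only [hD, mem_ofPred_eq, mem_empty_iff_false, iff_false, not_and, not_lt]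
      exact fun _ => hx.le
    · exact Eventually.of_forall fun x =>
        iff_of_false (fun hx => hz hx.1) (notMem_empty z)
  rw [measure_empty] at hDlim
  obtain ⟨X, hX⟩ := eventually_atTop.1
    (hDlim.eventually_lt_const (show (0 : ENNReal) < ENNReal.ofReal (1 / 4) by simp))
  refine ⟨X, 2 * (2 * |α| + 1), fun x hx y hy => ?_⟩
  obtain ⟨w, hw, hwn⟩ : ∃ w ∈ Icc (1 : ℝ) 2, w ∉ D x ∪ (fun w => w + -y) ⁻¹' D (x + y) := by
    by_contra! hcon
    have h1 : volume (Icc (1 : ℝ) 2) ≤ ENNReal.ofReal (1 / 4) + ENNReal.ofReal (1 / 4) := by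
      refine (measure_mono hcon).trans ((measure_union_le _ _).trans ?_)
      rw [measure_preimage_add_right]
      exact add_le_add (hX x hx).le (hX (x + y) (by linarith [hy.1])).le
    rw [Real.volume_Icc, ← ENNReal.ofReal_add (by norm_num) (by norm_num),
      ENNReal.ofReal_le_ofReal_iff (by norm_num)] at h1
    norm_num at h1
  simp only [hD, mem_union, mem_ofPred_eq, mem_preimage, not_or, not_and, not_lt] at hwn
  have h1 := abs_le.1 (hwn.1 ⟨by linarith [hw.1], hw.2⟩)
  have h2 := abs_le.1 (hwn.2 ⟨by linarith [hw.1, hy.2], by linarith [hw.2, hy.1]⟩)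
  rw [show x + y + (w + -y) = x + w by ring] at h2
  rw [abs_le]
  constructor <;> linarith

/-- Additive form of the lower Potter bound: unit steps gain at least `γ` by the pointwise limit, and
the fractional remainder costs a bounded amount. -/
lemma increment_lower {h : ℝ → ℝ} {α γ : ℝ} (hm : Measurable h) (hγ : γ < α)
    (hlim : ∀ y, 0 ≤ y → Tendsto (fun x => h (x + y) - h x) atTop (nhds (α * y))) :
    ∃ X C : ℝ, ∀ x, X ≤ x → ∀ y, 0 ≤ y → γ * y - C ≤ h (x + y) - h x := by
  obtain ⟨X₁, K, hK⟩ := increment_bounded hm hlim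
  have h1 := hlim 1 zero_le_one
  rw [mul_one] at h1
  obtain ⟨X₂, hX₂⟩ := eventually_atTop.1 (h1.eventually_const_lt hγ)
  refine ⟨max X₁ X₂, |γ| + K, fun x hx y hy => ?_⟩
  have hx1 : X₁ ≤ x := (le_max_left _ _).trans hx
  have hx2 : X₂ ≤ x := (le_max_right _ _).trans hx
  have hn : ∀ n : ℕ, γ * n ≤ h (x + n) - h x := by
    intro n
    induction n with
    | zero => simp
    | succ k ih =>
      have := hX₂ (x + k) (by linarith [(Nat.cast_nonneg k : (0 : ℝ) ≤ k)])
      push_cast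
      rw [← add_assoc]
      linarith
  have hfl := Nat.floor_le hy
  have hfl' := Nat.lt_floor_add_one y
  have hn0 : (0 : ℝ) ≤ ⌊y⌋₊ := Nat.cast_nonneg _
  have hr := abs_le.1 (hK (x + ⌊y⌋₊) (by linarith) (y - ⌊y⌋₊) ⟨by linarith, by linarith⟩)
  rw [show x + ⌊y⌋₊ + (y - ⌊y⌋₊) = x + y by ring] at hr
  have hγy : γ * (y - ⌊y⌋₊) ≤ |γ| := by
    calc γ * (y - ⌊y⌋₊) ≤ |γ| * (y - ⌊y⌋₊) :=
          mul_le_mul_of_nonneg_right (le_abs_self γ) (by linarith)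
      _ ≤ |γ| := mul_le_of_le_one_right (abs_nonneg γ) (by linarith)
  have := hn ⌊y⌋₊
  linarith [hr.1]

/-- Potter's bound: `F (t * u) / F t` is at most a constant times `u ^ γ` as long as both
arguments are large. It is `increment_lower` for `x ↦ log (F (exp x))`. -/
lemma potter_far {F : ℝ → ℝ} {α γ : ℝ} (hpos : ∀ t, 0 ≤ t → 0 < F t) (hF : RVInf α F)
    (hγ : γ < α) :
    ∃ T C : ℝ, 0 < T ∧ 0 < C ∧ ∀ t, T ≤ t → ∀ u, 0 < u → u ≤ 1 → T ≤ t * u →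
      F (t * u) ≤ C * u ^ γ * F t := by
  obtain ⟨hFm, -, hFlim⟩ := hF
  have hlim : ∀ y, 0 ≤ y → Tendsto (fun x => Real.log (F (Real.exp (x + y)))
      - Real.log (F (Real.exp x))) atTop (nhds (α * y)) := by
    intro y _
    have h1 := ((hFlim (Real.exp y) (Real.exp_pos y)).comp Real.tendsto_exp_atTop).log
      (Real.rpow_pos_of_pos (Real.exp_pos y) α).ne'
    rw [Real.log_rpow (Real.exp_pos y), Real.log_exp] at h1
    refine h1.congr fun x => ?_
    simp only [Function.comp]
    rw [Real.log_div (hpos _ (by positivity)).ne' (hpos _ (by positivity)).ne', Real.exp_add]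
  obtain ⟨X, C, hC⟩ := increment_lower (h := fun x => Real.log (F (Real.exp x)))
    (Real.measurable_log.comp (hFm.comp Real.measurable_exp)) hγ hlim
  refine ⟨Real.exp X, Real.exp C, Real.exp_pos _, Real.exp_pos _, fun t ht u hu hu1 htu => ?_⟩
  have ht0 : 0 < t := (Real.exp_pos X).trans_le ht
  have htu0 : 0 < t * u := by positivity
  have key := hC (Real.log (t * u)) ((Real.le_log_iff_exp_le htu0).2 htu) (-Real.log u)
    (by linarith [Real.log_nonpos hu.le hu1])
  rw [show Real.log (t * u) + -Real.log u = Real.log t by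
    rw [Real.log_mul ht0.ne' hu.ne']; ring, Real.exp_log htu0, Real.exp_log ht0] at key
  have hFt := hpos t ht0.le
  have hFtu := hpos _ htu0.le
  rw [← Real.log_le_log_iff hFtu (by positivity), Real.log_mul (by positivity) hFt.ne',
    Real.log_mul (Real.exp_pos _).ne' (by positivity), Real.log_exp, Real.log_rpow hu]
  linarith

/-- For `γ < 0` and `F` locally bounded, Potter's bound extends to all `u ∈ (0, 1]`: when
`t * u ≤ T`, the value `F (t * u)` is comparable to `F T`, and `(T / t) ^ γ ≤ u ^ γ`. -/
lemma potter_near {F : ℝ → ℝ} {α γ : ℝ} (hp : PosLocBdd F) (hF : RVInf α F)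
    (hγ : γ < α) (hγ0 : γ < 0) :
    ∃ T C : ℝ, 0 < T ∧ 0 < C ∧ ∀ t, T ≤ t → ∀ u, 0 < u → u ≤ 1 →
      F (t * u) / F t ≤ C * u ^ γ := by
  obtain ⟨T, C, hT, hC, h⟩ := potter_far hp.1 hF hγ
  obtain ⟨M, hM⟩ := hp.2 T
  have hFT := hp.1 T hT.le
  have hTM : F T ≤ M := (le_abs_self _).trans (hM T ⟨hT.le, le_rfl⟩)
  have hMT : 1 ≤ M / F T := (one_le_div hFT).2 hTM
  refine ⟨T, M / F T * C, hT, by positivity, fun t ht u hu hu1 => ?_⟩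
  have ht0 := hT.trans_le ht
  have hFt := hp.1 t ht0.le
  have hug : 0 < u ^ γ := Real.rpow_pos_of_pos hu γ
  rw [div_le_iff₀ hFt]
  rcases le_total T (t * u) with htu | htu
  · refine (h t ht u hu hu1 htu).trans ?_
    rw [mul_assoc (M / F T), mul_assoc (M / F T)]
    exact le_mul_of_one_le_left (by positivity) hMT
  · have h1 := h t ht (T / t) (by positivity) ((div_le_one ht0).2 ht)
      (by rw [mul_div_cancel₀ _ ht0.ne'])
    rw [mul_div_cancel₀ _ ht0.ne'] at h1
    have h2 : (T / t) ^ γ ≤ u ^ γ :=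
      Real.rpow_le_rpow_of_nonpos hu (by rw [le_div_iff₀ ht0]; linarith) hγ0.le
    calc F (t * u) ≤ M := (le_abs_self _).trans (hM _ ⟨by positivity, htu⟩)
      _ = M / F T * F T := by field_simp
      _ ≤ M / F T * (C * u ^ γ * F t) := by
          refine mul_le_mul_of_nonneg_left (h1.trans ?_) (by positivity)
          gcongr
      _ = M / F T * C * u ^ γ * F t := by ring

/-! ### The Beta integral -/

lemma beta_integral {a b : ℝ} (ha : -1 < a) (hb : -1 < b) :
    IntervalIntegrable (fun u : ℝ => (1 - u) ^ a * u ^ b) volume 0 1 ∧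
      ∫ u in (0 : ℝ)..1, (1 - u) ^ a * u ^ b = RBeta (a + 1) (b + 1) := by
  have hcast : ∀ u ∈ Icc (0 : ℝ) 1, ((u : ℂ) ^ (((b + 1 : ℝ) : ℂ) - 1) *
      (1 - (u : ℂ)) ^ (((a + 1 : ℝ) : ℂ) - 1)) = (((1 - u) ^ a * u ^ b : ℝ) : ℂ) := by
    intro u hu
    push_cast
    rw [Complex.ofReal_cpow hu.1, Complex.ofReal_cpow (by linarith [hu.2] : 0 ≤ 1 - u)]
    push_cast
    simp only [add_sub_cancel_right]
    ring
  constructor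
  · have h := Complex.betaIntegral_convergent (u := ((b + 1 : ℝ) : ℂ)) (v := ((a + 1 : ℝ) : ℂ))
      (by rw [Complex.ofReal_re]; linarith) (by rw [Complex.ofReal_re]; linarith)
    refine h.norm.congr fun u hu => ?_
    rw [uIoc_of_le zero_le_one] at hu
    have h1 : 0 ≤ 1 - u := by linarith [hu.2]
    have h2 := hu.1
    rw [hcast u ⟨hu.1.le, hu.2⟩, Complex.norm_real, Real.norm_of_nonneg (by positivity)]
  · have h := ProbabilityTheory.beta_eq_betaIntegralReal (b + 1) (a + 1) (by linarith)
      (by linarith)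
    rw [Complex.betaIntegral, intervalIntegral.integral_congr (g := fun u : ℝ =>
      (((1 - u) ^ a * u ^ b : ℝ) : ℂ)) (fun u hu => hcast u (by rwa [uIcc_of_le zero_le_one] at hu)),
      intervalIntegral.integral_ofReal, Complex.ofReal_re] at h
    rw [← h, ProbabilityTheory.beta, RBeta, add_comm (a + 1), mul_comm (Real.Gamma (a + 1))]

/-! ### The convolution -/

lemma measurable_convolution {F G : ℝ → ℝ} (hF : Measurable F) (hG : Measurable G) :
    Measurable fun t => ∫ s in (0:ℝ)..t, F (t - s) * G s := by
  have hf : Measurable fun p : ℝ × ℝ => F (p.1 - p.2) * G p.2 := by fun_prop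
  have h1 : MeasurableSet {p : ℝ × ℝ | 0 < p.2 ∧ p.2 ≤ p.1} :=
    (measurableSet_lt measurable_const measurable_snd).inter
      (measurableSet_le measurable_snd measurable_fst)
  have h2 : MeasurableSet {p : ℝ × ℝ | p.1 < p.2 ∧ p.2 ≤ 0} :=
    (measurableSet_lt measurable_fst measurable_snd).inter
      (measurableSet_le measurable_snd measurable_const)
  have h3 := (hf.indicator h1).stronglyMeasurable.integral_prod_right' (ν := volume)
  have h4 := (hf.indicator h2).stronglyMeasurable.integral_prod_right' (ν := volume)
  convert (h3.sub h4).measurable using 1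
  funext t
  simp only [Pi.sub_apply]
  rw [intervalIntegral, ← integral_indicator measurableSet_Ioc,
    ← integral_indicator measurableSet_Ioc]
  rfl

lemma convolution_tendsto {α₁ α₂ : ℝ} (hα₁ : -1 < α₁) (hα₂ : -1 < α₂)
    {F₁ F₂ : ℝ → ℝ} (hF₁p : PosLocBdd F₁) (hF₂p : PosLocBdd F₂)
    (h₁ : RVInf α₁ F₁) (h₂ : RVInf α₂ F₂) :
    Tendsto (fun t => (∫ s in (0:ℝ)..t, F₁ (t - s) * F₂ s) / (t * F₁ t * F₂ t))
        atTop (nhds (RBeta (α₁ + 1) (α₂ + 1))) := by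
  obtain ⟨γ₁, hγ₁, hγ₁'⟩ := exists_between (lt_min hα₁ (by norm_num : (-1 : ℝ) < 0))
  obtain ⟨γ₂, hγ₂, hγ₂'⟩ := exists_between (lt_min hα₂ (by norm_num : (-1 : ℝ) < 0))
  rw [lt_min_iff] at hγ₁' hγ₂'
  obtain ⟨T₁, C₁, hT₁, hC₁, hb₁⟩ := potter_near hF₁p h₁ hγ₁'.1 hγ₁'.2
  obtain ⟨T₂, C₂, hT₂, hC₂, hb₂⟩ := potter_near hF₂p h₂ hγ₂'.1 hγ₂'.2
  obtain ⟨hm₁, -, hl₁⟩ := h₁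
  obtain ⟨hm₂, -, hl₂⟩ := h₂
  rw [← (beta_integral hα₁ hα₂).2]
  -- The majorant is infinite in the limit `u → 1` but takes the junk value `0 ^ γ₁ = 0` at `u = 1`.
  have hne : ∀ᵐ u : ℝ, u ≠ 1 := by simp [ae_iff]
  have main : Tendsto (fun t => ∫ u in (0 : ℝ)..1,
      F₁ (t * (1 - u)) / F₁ t * (F₂ (t * u) / F₂ t)) atTop
      (nhds (∫ u in (0 : ℝ)..1, (1 - u) ^ α₁ * u ^ α₂)) := by
    refine intervalIntegral.tendsto_integral_filter_of_dominated_convergence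
      (fun u => C₁ * C₂ * ((1 - u) ^ γ₁ * u ^ γ₂)) ?_ ?_
      ((beta_integral hγ₁ hγ₂).1.const_mul _) ?_
    · exact Eventually.of_forall fun t => Measurable.aestronglyMeasurable (by fun_prop)
    · filter_upwards [eventually_ge_atTop T₁, eventually_ge_atTop T₂] with t ht₁ ht₂
      filter_upwards [hne] with u hu1 hu
      rw [uIoc_of_le zero_le_one] at hu
      have hu2 : u < 1 := lt_of_le_of_ne hu.2 hu1
      have hu0 := hu.1
      have ht0 : 0 < t := hT₁.trans_le ht₁
      have hv : 0 < 1 - u := by linarith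
      have p1 := hF₁p.1 t ht0.le
      have p2 := hF₂p.1 t ht0.le
      have p3 := hF₁p.1 (t * (1 - u)) (by positivity)
      have p4 := hF₂p.1 (t * u) (by positivity)
      rw [Real.norm_of_nonneg (by positivity)]
      calc _ ≤ C₁ * (1 - u) ^ γ₁ * (C₂ * u ^ γ₂) :=
            mul_le_mul (hb₁ t ht₁ _ hv (by linarith)) (hb₂ t ht₂ u hu0 hu.2)
              (by positivity) (by positivity)
        _ = _ := by ring
    · filter_upwards [hne] with u hu1 hu
      rw [uIoc_of_le zero_le_one] at hu
      have hu2 : u < 1 := lt_of_le_of_ne hu.2 hu1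
      exact (hl₁ (1 - u) (by linarith)).mul (hl₂ u hu.1)
  refine main.congr' ?_
  filter_upwards [eventually_gt_atTop 0] with t ht
  have p1 := hF₁p.1 t ht.le
  have p2 := hF₂p.1 t ht.le
  have hsub := intervalIntegral.mul_integral_comp_mul_left (a := 0) (b := 1) (c := t)
    (f := fun s => F₁ (t - s) * F₂ s)
  rw [mul_zero, mul_one] at hsub
  rw [← hsub]
  have : ∀ u, F₁ (t * (1 - u)) / F₁ t * (F₂ (t * u) / F₂ t) =
      (F₁ t * F₂ t)⁻¹ * (F₁ (t - t * u) * F₂ (t * u)) := by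
    intro u
    rw [mul_sub, mul_one]
    field_simp
  simp_rw [this]
  rw [intervalIntegral.integral_const_mul]
  field_simp

/-- regular variation of convolutions, with the asymptotic
equivalence `F₁*F₂(t) ~ B(α₁+1,α₂+1)·t·F₁(t)·F₂(t)`. -/
theorem statement_17 (α₁ α₂ : ℝ) (hα₁ : -1 < α₁) (hα₂ : -1 < α₂)
    (F₁ F₂ : ℝ → ℝ) (hF₁p : PosLocBdd F₁) (hF₂p : PosLocBdd F₂)
    (h₁ : RVInf α₁ F₁) (h₂ : RVInf α₂ F₂) :
    RVInf (α₁ + α₂ + 1) (fun t => ∫ s in (0:ℝ)..t, F₁ (t - s) * F₂ s) ∧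
      Tendsto
        (fun t => (∫ s in (0:ℝ)..t, F₁ (t - s) * F₂ s) /
          (RBeta (α₁ + 1) (α₂ + 1) * t * F₁ t * F₂ t))
        atTop (nhds 1) := by
  have hB : 0 < RBeta (α₁ + 1) (α₂ + 1) :=
    ProbabilityTheory.beta_pos (by linarith) (by linarith)
  have hlim := convolution_tendsto hα₁ hα₂ hF₁p hF₂p h₁ h₂
  refine ⟨⟨measurable_convolution h₁.1 h₂.1, Or.inl ?_, fun x hx => ?_⟩, ?_⟩
  · filter_upwards [hlim.eventually_const_lt hB, eventually_gt_atTop 0] with t ht ht0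
    have p1 := hF₁p.1 t ht0.le
    have p2 := hF₂p.1 t ht0.le
    exact (div_pos_iff_of_pos_right (by positivity)).1 ht
  · have hx' : Tendsto (fun t : ℝ => t * x) atTop atTop := tendsto_id.atTop_mul_const hx
    have h := ((hlim.comp hx').div hlim hB.ne').mul
      (((h₁.2.2 x hx).mul (h₂.2.2 x hx)).mul_const x)
    have e : RBeta (α₁ + 1) (α₂ + 1) / RBeta (α₁ + 1) (α₂ + 1) * (x ^ α₁ * x ^ α₂ * x) =
        x ^ (α₁ + α₂ + 1) := by
      rw [div_self hB.ne', one_mul, Real.rpow_add hx, Real.rpow_add hx, Real.rpow_one]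
    rw [e] at h
    refine h.congr' ?_
    filter_upwards [eventually_gt_atTop 0] with t ht0
    have p1 := hF₁p.1 t ht0.le
    have p2 := hF₂p.1 t ht0.le
    have p3 := hF₁p.1 (t * x) (by positivity)
    have p4 := hF₂p.1 (t * x) (by positivity)
    simp only [Function.comp, Pi.div_apply]
    generalize (∫ s in (0:ℝ)..t * x, F₁ (t * x - s) * F₂ s) = a
    generalize (∫ s in (0:ℝ)..t, F₁ (t - s) * F₂ s) = b
    field_simp
  · have h := hlim.div_const (RBeta (α₁ + 1) (α₂ + 1))
    rw [div_self hB.ne'] at h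
    refine h.congr fun t => ?_
    rw [div_div]
    congr 1
    ring
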